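/- arXiv:2403.00693 — 5 statements merged into one kernel-verified Lean document; each statement's English description precedes it below -/
import Mathlib

section
/- There exists a real number a ∈ (0, 1/7) such that the iterated function system 𝒮₁(a) = {x/7, x/7 + a, x/7 + 6/7} on ℝ satisfies the weak separation property but does not satisfy the convex finite type condition; that is, the collection of neighbourhood types {N_{(0,1)}(σ) : σ a finite word over {1,2,3}} is infinite. -/
open Set

/-- The IFS 𝒮₁(a) = {x/7, x/7 + a, x/7 + 6/7} on ℝ. -/
noncomputable def S1 (a : ℝ) : Fin 3 → ℝ → ℝ :=
  ![fun x => x / 7, fun x => x / 7 + a, fun x => x / 7 + 6 / 7]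

/-- For a word σ = (s₁,…,s_k), the composition S_σ = S_{s₁} ∘ ⋯ ∘ S_{s_k}. -/
noncomputable def Sw1 (a : ℝ) : List (Fin 3) → ℝ → ℝ
  | [] => id
  | i :: σ => S1 a i ∘ Sw1 a σ

/-- For words σ, τ of the same length k, S_σ⁻¹ ∘ S_τ is the translation by
`amt1 a σ τ = 7 ^ k * (S_τ(0) − S_σ(0))`. -/
noncomputable def amt1 (a : ℝ) (σ τ : List (Fin 3)) : ℝ :=
  7 ^ σ.length * (Sw1 a τ 0 - Sw1 a σ 0)

/-- The weak separation property for 𝒮₁(a): the nonzero translation amounts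
`a_{σ,τ}` over pairs of words of equal length are bounded away from 0. -/
def WSP1 (a : ℝ) : Prop :=
  ∃ ε > 0, ∀ σ τ : List (Fin 3), σ.length = τ.length →
    amt1 a σ τ ≠ 0 → ε ≤ |amt1 a σ τ|

/-- The neighbourhood type of a word σ relative to the open interval (0,1). -/
noncomputable def Ntype1 (a : ℝ) (σ : List (Fin 3)) : Set ℝ :=
  { t | ∃ τ : List (Fin 3), τ.length = σ.length ∧
      (Sw1 a σ '' Ioo 0 1 ∩ Sw1 a τ '' Ioo 0 1).Nonempty ∧ t = amt1 a σ τ }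

/-- The convex finite type condition: only finitely many neighbourhood types
relative to (0,1). -/
def FTCco1 (a : ℝ) : Prop := (Set.range (Ntype1 a)).Finite

/-!
Put `A = 7a`. The translations `a_{σ,τ}` are the values reachable from `0` by the maps
`t ↦ 7 t + δ`, where `δ` is a difference of two of the digits `0, A, 6`. As `|δ| ≤ 6`, the region
`|t| ≥ 1` is never left, so both properties are decided by the translations in `(-1, 1)`. If
`t ↦ 7 t - 6` and `t ↦ 7 t - A` generate from `A` an orbit `t 0, t 1, …` inside `[1 - A, 1)`, then
every other `δ` throws `t n` out of `(-1, 1)`, so these translations are exactly `0` and `± t n`.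
Hence the WSP holds, while the FTC_co fails as soon as the orbit is infinite.

Substituting `t n = 1 - 5 x n / (1 - x 0)` turns the two maps into `x ↦ 7 x` and `x ↦ 7 x - 1`, so
`x n` may be taken as the `n`-th tail `0.dₙdₙ₊₁…` of a base 7 expansion with digits `0` and `1`.
This orbit is infinite when the ones are infinitely many but separated by arbitrarily long gaps, and
it stays in `[1 - A, 1)` when `d₀ = d₁ = 0`.
-/

section Translations

variable {a : ℝ}

/-- The digits `d₁, d₂, d₃` of `𝒮₁(a)`, normalised so that `Sᵢ(x) = (x + dᵢ) / 7`. -/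
noncomputable def digit (a : ℝ) : Fin 3 → ℝ := ![0, 7 * a, 6]

lemma S1_apply (a : ℝ) (i : Fin 3) (x : ℝ) : S1 a i x = (x + digit a i) / 7 := by
  fin_cases i <;> simp [S1, digit] <;> ring

lemma Sw1_apply (a : ℝ) (σ : List (Fin 3)) (x : ℝ) :
    Sw1 a σ x = x / 7 ^ σ.length + Sw1 a σ 0 := by
  induction σ with
  | nil => simp [Sw1]
  | cons i σ ih =>
    simp only [Sw1, Function.comp_apply, S1_apply, List.length_cons, ih]
    ring

lemma Sw1_append (a : ℝ) (σ τ : List (Fin 3)) : Sw1 a (σ ++ τ) = Sw1 a σ ∘ Sw1 a τ := by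
  induction σ with
  | nil => rfl
  | cons i σ ih => rw [List.cons_append, Sw1, ih, Sw1, Function.comp_assoc]

lemma Sw1_apply_eq_Sw1_add_amt1 {σ τ : List (Fin 3)} (h : σ.length = τ.length) (x : ℝ) :
    Sw1 a τ x = Sw1 a σ (x + amt1 a σ τ) := by
  rw [Sw1_apply a τ, Sw1_apply a σ, amt1, ← h]
  field

lemma amt1_append {σ τ : List (Fin 3)} (h : σ.length = τ.length) (ρ π : List (Fin 3)) :
    amt1 a (σ ++ ρ) (τ ++ π) = 7 ^ ρ.length * amt1 a σ τ + amt1 a ρ π := by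
  simp only [amt1, Sw1_append, Function.comp_apply, Sw1_apply a σ (Sw1 a ρ 0),
    Sw1_apply a τ (Sw1 a π 0), List.length_append, ← h]
  field

lemma amt1_concat {σ τ : List (Fin 3)} (h : σ.length = τ.length) (i j : Fin 3) :
    amt1 a (σ ++ [i]) (τ ++ [j]) = 7 * amt1 a σ τ + (digit a j - digit a i) := by
  have hsingle : amt1 a [i] [j] = digit a j - digit a i := by
    simp only [amt1, Sw1, S1_apply, Function.comp_apply, id_eq, List.length_singleton]
    ring
  rw [amt1_append h, hsingle, List.length_singleton, pow_one]

lemma amt1_mem_of_mapsTo {P : Set ℝ} (hzero : 0 ∈ P)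
    (hstep : ∀ i j, MapsTo (fun t ↦ 7 * t + (digit a j - digit a i)) P P)
    {σ τ : List (Fin 3)} (h : σ.length = τ.length) : amt1 a σ τ ∈ P := by
  induction σ using List.reverseRecOn generalizing τ with
  | nil =>
    obtain rfl := List.length_eq_zero_iff.1 h.symm
    simpa [amt1] using hzero
  | append_singleton σ i ih =>
    obtain rfl | ⟨τ, j, rfl⟩ := τ.eq_nil_or_concat'
    · simp at h
    · have hlen : σ.length = τ.length := by simpa using h
      rw [amt1_concat hlen]
      exact hstep i j (ih hlen)

lemma amt1_mem_Ntype1 {σ τ : List (Fin 3)} (h : σ.length = τ.length) (ht : |amt1 a σ τ| < 1) :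
    amt1 a σ τ ∈ Ntype1 a σ := by
  obtain ⟨hlower, hupper⟩ := abs_lt.1 ht
  set x := (1 - amt1 a σ τ) / 2 with hx
  have hxτ : x ∈ Ioo (0 : ℝ) 1 := ⟨by linarith, by linarith⟩
  have hxσ : x + amt1 a σ τ ∈ Ioo (0 : ℝ) 1 := ⟨by linarith, by linarith⟩
  exact ⟨τ, h.symm, ⟨Sw1 a τ x, Sw1_apply_eq_Sw1_add_amt1 h x ▸ mem_image_of_mem _ hxσ,
    mem_image_of_mem _ hxτ⟩, rfl⟩

lemma finite_Ntype1 (a : ℝ) (σ : List (Fin 3)) : (Ntype1 a σ).Finite := by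
  refine ((List.finite_length_eq (Fin 3) σ.length).image (amt1 a σ)).subset ?_
  rintro t ⟨τ, hτ, -, rfl⟩
  exact mem_image_of_mem _ hτ

lemma FTCco1.finite_sUnion (h : FTCco1 a) : (⋃₀ range (Ntype1 a)).Finite :=
  h.sUnion (forall_mem_range.2 (finite_Ntype1 a))

lemma abs_digit_sub_digit (h₀ : 0 ≤ a) (h₆ : 7 * a ≤ 6) (i j : Fin 3) :
    |digit a j - digit a i| = 0 ∨ |digit a j - digit a i| = 7 * a ∨
      |digit a j - digit a i| = 6 - 7 * a ∨ |digit a j - digit a i| = 6 := by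
  have hgap : |7 * a - 6| = 6 - 7 * a := by rw [abs_of_nonpos (by linarith)]; ring
  fin_cases i <;> fin_cases j <;>
    simp [digit, abs_of_nonneg h₀, hgap, abs_sub_comm 6 (7 * a)]

end Translations

section Orbits

/-- A sequence in `[1 - 7a, 1)` starting at `7a` and following at each step one of the maps
`x ↦ 7 x - 6` and `x ↦ 7 x - 7 a`. -/
structure IsTranslationOrbit (a : ℝ) (t : ℕ → ℝ) : Prop where
  zero : t 0 = 7 * a
  succ : ∀ n, t (n + 1) = 7 * t n - 6 ∨ t (n + 1) = 7 * t n - 7 * a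
  one_sub_le : ∀ n, 1 - 7 * a ≤ t n
  lt_one : ∀ n, t n < 1

/-- The set in which all translations `a_{σ,τ}` lie when the sequence `t` is a translation orbit. -/
def translationSet (t : ℕ → ℝ) : Set ℝ := {s | s = 0 ∨ 1 ≤ |s| ∨ |s| ∈ range t}

lemma neg_mem_translationSet {t : ℕ → ℝ} {s : ℝ} (hs : s ∈ translationSet t) :
    -s ∈ translationSet t := by
  simpa [translationSet] using hs

namespace IsTranslationOrbit

variable {a : ℝ} {t : ℕ → ℝ}

lemma seven_mul_lt_one (h : IsTranslationOrbit a t) : 7 * a < 1 := h.zero ▸ h.lt_one 0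

lemma pos (h : IsTranslationOrbit a t) : 0 < a := by
  linarith [h.one_sub_le 0, h.zero]

lemma apply_pos (h : IsTranslationOrbit a t) (n : ℕ) : 0 < t n := by
  linarith [h.one_sub_le n, h.seven_mul_lt_one]

lemma mem_translationSet (h : IsTranslationOrbit a t) (n : ℕ) : t n ∈ translationSet t :=
  Or.inr (Or.inr ⟨n, (abs_of_pos (h.apply_pos n)).symm⟩)

lemma seven_mul_add_mem (h : IsTranslationOrbit a t) (n : ℕ) (i j : Fin 3) :
    7 * t n + (digit a j - digit a i) ∈ translationSet t := by
  have ha := h.pos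
  have ha' := h.seven_mul_lt_one
  have hnext := h.one_sub_le (n + 1)
  have hnext' := h.lt_one (n + 1)
  have hcases := abs_digit_sub_digit ha.le (by linarith) i j
  set δ := digit a j - digit a i
  suffices 7 * t n + δ = t (n + 1) ∨ 1 ≤ 7 * t n + δ ∨ 7 * t n + δ ≤ -1 by
    rcases this with heq | hge | hle
    · exact heq ▸ h.mem_translationSet (n + 1)
    · exact Or.inr (Or.inl (le_abs.2 (Or.inl hge)))
    · exact Or.inr (Or.inl (le_abs.2 (Or.inr (by linarith))))
  rcases le_total 0 δ with hδ | hδ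
  · refine Or.inr (Or.inl ?_)
    rcases h.succ n with hn | hn <;> linarith
  · rw [abs_of_nonpos hδ] at hcases
    rcases h.succ n with hn | hn <;> rcases hcases with hδ | hδ | hδ | hδ <;>
      first
      | exact Or.inl (by linarith)
      | exact Or.inr (Or.inl (by linarith))
      | exact Or.inr (Or.inr (by linarith))

lemma digit_sub_digit_mem (h : IsTranslationOrbit a t) (i j : Fin 3) :
    digit a j - digit a i ∈ translationSet t := by
  have ha := h.seven_mul_lt_one
  rcases abs_digit_sub_digit h.pos.le (by linarith) i j with hδ | hδ | hδ | hδ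
  · exact Or.inl (abs_eq_zero.1 hδ)
  · exact Or.inr (Or.inr ⟨0, h.zero.trans hδ.symm⟩)
  · exact Or.inr (Or.inl (by linarith))
  · exact Or.inr (Or.inl (by linarith))

lemma mapsTo_translationSet (h : IsTranslationOrbit a t) (i j : Fin 3) :
    MapsTo (fun s ↦ 7 * s + (digit a j - digit a i)) (translationSet t) (translationSet t) := by
  rintro s (rfl | hs | ⟨n, hn⟩)
  · simpa using h.digit_sub_digit_mem i j
  · have hδ : |digit a j - digit a i| ≤ 6 := by
      have ha := h.pos
      have ha' := h.seven_mul_lt_one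
      rcases abs_digit_sub_digit ha.le (by linarith) i j with hδ | hδ | hδ | hδ <;> linarith
    refine Or.inr (Or.inl ?_)
    calc (1 : ℝ) ≤ |7 * s| - |digit a j - digit a i| := by
          rw [abs_mul, abs_of_pos (by norm_num : (0 : ℝ) < 7)]; linarith
      _ ≤ |7 * s + (digit a j - digit a i)| := abs_sub_abs_le_abs_add _ _
  · rcases eq_or_eq_neg_of_abs_eq hn.symm with rfl | rfl
    · exact h.seven_mul_add_mem n i j
    · convert neg_mem_translationSet (h.seven_mul_add_mem n j i) using 1
      ring

lemma wsp1 (h : IsTranslationOrbit a t) : WSP1 a := by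
  refine ⟨1 - 7 * a, by linarith [h.seven_mul_lt_one], fun σ τ hlen hne ↦ ?_⟩
  have hmem : amt1 a σ τ ∈ translationSet t :=
    amt1_mem_of_mapsTo (Or.inl rfl) h.mapsTo_translationSet hlen
  rcases hmem with hzero | hone | ⟨n, hn⟩
  · exact absurd hzero hne
  · linarith [h.pos]
  · exact hn ▸ h.one_sub_le n

lemma exists_amt1_eq (h : IsTranslationOrbit a t) (n : ℕ) :
    ∃ σ τ : List (Fin 3), σ.length = τ.length ∧ amt1 a σ τ = t n := by
  induction n with
  | zero =>
    refine ⟨[] ++ [0], [] ++ [1], rfl, ?_⟩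
    rw [amt1_concat rfl, h.zero]
    simp [amt1, digit]
  | succ n ih =>
    obtain ⟨σ, τ, hlen, ht⟩ := ih
    rcases h.succ n with hn | hn
    · refine ⟨σ ++ [2], τ ++ [0], by simp [hlen], ?_⟩
      rw [amt1_concat hlen, ht, hn]
      simp [digit, sub_eq_add_neg]
    · refine ⟨σ ++ [1], τ ++ [0], by simp [hlen], ?_⟩
      rw [amt1_concat hlen, ht, hn]
      simp [digit, sub_eq_add_neg]

lemma mem_sUnion_Ntype1 (h : IsTranslationOrbit a t) (n : ℕ) :
    t n ∈ ⋃₀ range (Ntype1 a) := by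
  obtain ⟨σ, τ, hlen, ht⟩ := h.exists_amt1_eq n
  have habs : |amt1 a σ τ| < 1 := by
    rw [ht, abs_of_pos (h.apply_pos n)]
    exact h.lt_one n
  exact ⟨_, mem_range_self σ, ht ▸ amt1_mem_Ntype1 hlen habs⟩

lemma not_ftcco1 (h : IsTranslationOrbit a t) (hinf : (range t).Infinite) : ¬ FTCco1 a :=
  fun hfin ↦ hinf (hfin.finite_sUnion.subset (range_subset_iff.2 h.mem_sUnion_Ntype1))

end IsTranslationOrbit

end Orbits

section DigitTails

variable {b : ℕ} {d : ℕ → Fin b}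

/-- The real number `0.dₙdₙ₊₁dₙ₊₂…` in base `b`. -/
noncomputable def digitTail (d : ℕ → Fin b) (n : ℕ) : ℝ := Real.ofDigits fun i ↦ d (i + n)

lemma digitTail_eq_sum_add (d : ℕ → Fin b) (n k : ℕ) :
    digitTail d n = ∑ i ∈ Finset.range k, (d (i + n) : ℝ) * ((b : ℝ) ^ (i + 1))⁻¹ +
      ((b : ℝ) ^ k)⁻¹ * digitTail d (n + k) := by
  rw [digitTail, Real.ofDigits_eq_sum_add_ofDigits _ k]
  simp only [Real.ofDigitsTerm, digitTail, add_assoc, add_comm n k]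

lemma mul_digitTail (d : ℕ → Fin b) (n : ℕ) :
    b * digitTail d n = d n + digitTail d (n + 1) := by
  have hb : (b : ℝ) ≠ 0 := Nat.cast_ne_zero.2 (d 0).pos.ne'
  rw [digitTail_eq_sum_add d n 1]
  simp only [Finset.sum_range_one, zero_add, pow_one]
  field

lemma digitTail_eq_inv_pow_mul {n k : ℕ} (h : ∀ i < k, (d (i + n) : ℕ) = 0) :
    digitTail d n = ((b : ℝ) ^ k)⁻¹ * digitTail d (n + k) := by
  rw [digitTail_eq_sum_add d n k, Finset.sum_eq_zero, zero_add]
  intro i hi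
  simp [h i (Finset.mem_range.1 hi)]

lemma digitTail_pos {n m : ℕ} (hnm : n ≤ m) (hm : (d m : ℕ) ≠ 0) : 0 < digitTail d n := by
  refine Real.summable_ofDigitsTerm.tsum_pos (fun _ ↦ Real.ofDigitsTerm_nonneg) (m - n) ?_
  have hb : 0 < b := (d 0).pos
  simp only [Real.ofDigitsTerm, Nat.sub_add_cancel hnm]
  positivity

lemma sub_one_mul_digitTail_le {c : ℕ} (hd : ∀ i, (d i : ℕ) ≤ c) (n : ℕ) :
    ((b : ℝ) - 1) * digitTail d n ≤ c := by
  obtain hb | hb := (Nat.one_le_iff_ne_zero.2 (d 0).pos.ne').eq_or_lt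
  · simp [← hb]
  have hb' : (1 : ℝ) < b := by exact_mod_cast hb
  have hgeom : HasSum (fun i : ℕ ↦ c * ((b : ℝ) ^ (i + 1))⁻¹) (c / (b - 1)) := by
    convert! (hasSum_geometric_of_lt_one (by positivity) (inv_lt_one_of_one_lt₀ hb')).mul_left
      (c * (b : ℝ)⁻¹) using 1
    · ext i
      rw [pow_succ', mul_inv, inv_pow, mul_assoc]
    · have : (b : ℝ) - 1 ≠ 0 := by linarith
      field
  rw [mul_comm, ← le_div_iff₀ (by linarith)]
  exact hasSum_le (fun i ↦ mul_le_mul_of_nonneg_right (Nat.cast_le.2 (hd (i + n)))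
    (by positivity)) Real.summable_ofDigitsTerm.hasSum hgeom

lemma exists_digitTail_lt (hb : 1 < b) (hgap : ∀ k, ∃ n, ∀ i < k, (d (i + n) : ℕ) = 0)
    {ε : ℝ} (hε : 0 < ε) : ∃ n, digitTail d n < ε := by
  obtain ⟨k, hk⟩ := exists_pow_lt_of_lt_one hε
    (inv_lt_one_of_one_lt₀ (by exact_mod_cast hb : (1 : ℝ) < b))
  obtain ⟨n, hn⟩ := hgap k
  refine ⟨n, ?_⟩
  calc digitTail d n = ((b : ℝ) ^ k)⁻¹ * digitTail d (n + k) := digitTail_eq_inv_pow_mul hn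
    _ ≤ ((b : ℝ) ^ k)⁻¹ := mul_le_of_le_one_right (by positivity) (Real.ofDigits_le_one _)
    _ < ε := by rwa [← inv_pow]

lemma infinite_range_digitTail (hnz : ∀ n, ∃ m ≥ n, (d m : ℕ) ≠ 0)
    (hgap : ∀ k, ∃ n, ∀ i < k, (d (i + n) : ℕ) = 0) : (range (digitTail d)).Infinite := by
  have hpos (n : ℕ) : 0 < digitTail d n :=
    let ⟨_, hnm, hm⟩ := hnz n
    digitTail_pos hnm hm
  have hb : 1 < b := by
    obtain ⟨m, -, hm⟩ := hnz 0
    have := (d m).isLt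
    lia
  intro hfin
  obtain ⟨_, ⟨n, rfl⟩, hmin⟩ := hfin.exists_minimal (range_nonempty _)
  obtain ⟨k, hk⟩ := exists_digitTail_lt hb hgap (hpos n)
  exact hk.not_ge (hmin (mem_range_self k) hk.le)

end DigitTails

section DigitOrbits

variable {d : ℕ → Fin 7}

/-- The image of the digit tails under the affine map that conjugates `x ↦ 7 x` and `x ↦ 7 x - 1`
to `x ↦ 7 x - 6` and `x ↦ 7 x - A`, where `A` is the `0`-th term of the sequence. -/
noncomputable def digitOrbit (d : ℕ → Fin 7) (n : ℕ) : ℝ :=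
  1 - 5 / (1 - digitTail d 0) * digitTail d n

lemma digitOrbit_succ (h : digitTail d 0 ≠ 1) {n : ℕ} (hd : (d n : ℕ) ≤ 1) :
    digitOrbit d (n + 1) = 7 * digitOrbit d n - 6 ∨
      digitOrbit d (n + 1) = 7 * digitOrbit d n - digitOrbit d 0 := by
  have hne : 1 - digitTail d 0 ≠ 0 := sub_ne_zero.2 h.symm
  have htail := mul_digitTail d n
  push_cast at htail
  rcases Nat.le_one_iff_eq_zero_or_eq_one.1 hd with hn | hn
  · left
    rw [hn, Nat.cast_zero, zero_add] at htail
    rw [digitOrbit, digitOrbit, ← htail]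
    ring
  · right
    rw [hn, Nat.cast_one] at htail
    rw [digitOrbit, digitOrbit, digitOrbit, ← sub_eq_of_eq_add' htail]
    field

lemma infinite_range_digitOrbit (h : digitTail d 0 ≠ 1) (hinf : (range (digitTail d)).Infinite) :
    (range (digitOrbit d)).Infinite := by
  have hne : 5 / (1 - digitTail d 0) ≠ 0 := div_ne_zero (by norm_num) (sub_ne_zero.2 h.symm)
  have hinj : Function.Injective fun x ↦ 1 - 5 / (1 - digitTail d 0) * x :=
    sub_right_injective.comp (mul_right_injective₀ hne)
  have hrange := hinf.image hinj.injOn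
  rwa [← range_comp] at hrange

lemma digitTail_zero_le (hd : ∀ i, (d i : ℕ) ≤ 1) (hzero : ∀ i < 2, (d i : ℕ) = 0) :
    digitTail d 0 ≤ 1 / 294 := by
  have hshift : digitTail d 0 = ((7 : ℕ) ^ 2 : ℝ)⁻¹ * digitTail d (0 + 2) :=
    digitTail_eq_inv_pow_mul hzero
  have hbound := sub_one_mul_digitTail_le hd (0 + 2)
  norm_num at hshift hbound
  linarith

lemma digitTail_zero_lt_one (hd : ∀ i, (d i : ℕ) ≤ 1) (hzero : ∀ i < 2, (d i : ℕ) = 0) :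
    digitTail d 0 < 1 :=
  (digitTail_zero_le hd hzero).trans_lt (by norm_num)

lemma isTranslationOrbit_digitOrbit (hd : ∀ i, (d i : ℕ) ≤ 1) (hzero : ∀ i < 2, (d i : ℕ) = 0)
    (hnz : ∀ n, ∃ m ≥ n, (d m : ℕ) ≠ 0) :
    IsTranslationOrbit (digitOrbit d 0 / 7) (digitOrbit d) := by
  have hx₀ := digitTail_zero_le hd hzero
  have hx₁ := digitTail_zero_lt_one hd hzero
  have hpos : 0 < 1 - digitTail d 0 := sub_pos.2 hx₁
  have hA : 7 * (digitOrbit d 0 / 7) = digitOrbit d 0 := by ring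
  refine ⟨hA.symm, fun n ↦ hA.symm ▸ digitOrbit_succ hx₁.ne (hd n), fun n ↦ ?_, fun n ↦ ?_⟩
  · have hbound := sub_one_mul_digitTail_le hd n
    norm_num at hbound
    have hsum : 5 / (1 - digitTail d 0) * (digitTail d 0 + digitTail d n) ≤ 1 := by
      rw [div_mul_eq_mul_div, div_le_one hpos]
      linarith
    rw [hA, digitOrbit, digitOrbit]
    linarith
  · obtain ⟨m, hnm, hm⟩ := hnz n
    exact sub_lt_self 1 (mul_pos (div_pos (by norm_num) hpos) (digitTail_pos hnm hm))

/-- A base 7 digit sequence with infinitely many ones and arbitrarily long blocks of zeros; the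
shift by `2` skips the squares `0` and `1`, so that the sequence starts with two zeros. -/
def squareDigit (i : ℕ) : Fin 7 := if IsSquare (i + 2) then 1 else 0

lemma squareDigit_le_one (i : ℕ) : (squareDigit i : ℕ) ≤ 1 := by
  unfold squareDigit
  split <;> simp

lemma squareDigit_eq_zero {i m : ℕ} (hm : m * m < i + 2) (hm' : i + 2 < (m + 1) * (m + 1)) :
    (squareDigit i : ℕ) = 0 := by
  have hsq : ¬ IsSquare (i + 2) := fun ⟨r, hr⟩ ↦ Nat.not_exists_sq hm hm' ⟨r, hr.symm⟩
  simp [squareDigit, hsq]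

lemma squareDigit_eq_zero_of_lt_two (i : ℕ) (hi : i < 2) : (squareDigit i : ℕ) = 0 :=
  squareDigit_eq_zero (m := 1) (by lia) (by lia)

lemma exists_squareDigit_ne_zero (n : ℕ) : ∃ m ≥ n, (squareDigit m : ℕ) ≠ 0 := by
  have hsq : IsSquare (n ^ 2 + 4 * n + 2 + 2) := ⟨n + 2, by ring⟩
  refine ⟨n ^ 2 + 4 * n + 2, by lia, ?_⟩
  simp [squareDigit, hsq]

lemma exists_squareDigit_eq_zero_block (k : ℕ) :
    ∃ n, ∀ i < k, (squareDigit (i + n) : ℕ) = 0 :=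
  ⟨k ^ 2 + 2 * k, fun i hi ↦ squareDigit_eq_zero (m := k + 1) (by lia) (by lia)⟩

end DigitOrbits

theorem stmt0 : ∃ a ∈ Ioo (0 : ℝ) (1 / 7), WSP1 a ∧ ¬ FTCco1 a := by
  have horbit := isTranslationOrbit_digitOrbit squareDigit_le_one squareDigit_eq_zero_of_lt_two
    exists_squareDigit_ne_zero
  have htail : digitTail squareDigit 0 ≠ 1 :=
    (digitTail_zero_lt_one squareDigit_le_one squareDigit_eq_zero_of_lt_two).ne
  have hinf : (range (digitOrbit squareDigit)).Infinite :=
    infinite_range_digitOrbit htail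
      (infinite_range_digitTail exists_squareDigit_ne_zero exists_squareDigit_eq_zero_block)
  exact ⟨digitOrbit squareDigit 0 / 7, ⟨horbit.pos, by linarith [horbit.seven_mul_lt_one]⟩,
    horbit.wsp1, horbit.not_ftcco1 hinf⟩
end

section
/- There exists a real number a ∈ (0, 1/7) such that the iterated function system 𝒮₁(a) = {x/7, x/7 + a, x/7 + 6/7} satisfies the weak separation property and the open set V = ⋃_{n ≥ 0} ⋃_{σ ∈ {1,2,3}^n} S_σ((3/7, 4/7)) witnesses the open set condition: V is nonempty and open, S_i(V) ⊆ V for i = 1, 2, 3, and S_i(V) ∩ S_j(V) = ∅ for all i ≠ j. -/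
open Set

/-- The open set V = ⋃_{n ≥ 0} ⋃_{σ ∈ {1,2,3}^n} S_σ((3/7, 4/7)). -/
noncomputable def Vosc (a : ℝ) : Set ℝ :=
  ⋃ σ : List (Fin 3), Sw1 a σ '' Ioo (3 / 7) (4 / 7)

/-!
For small `a`, only the images of `Vosc a` under `S1 a 0` and `S1 a 1` can meet. These two maps
differ by the translation by `a`, so the images are disjoint as soon as `Vosc a` and its translate
by `7 * a` are. Now `Vosc a` lies in `(0, a + 1/7) ∪ (3/7, 4/7) ∪ (6/7, 1)`, and for
`1/42 ≤ a ≤ 1/28` the translation by `7 * a` carries these three intervals into the gaps between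
them or beyond `1`. All translations `amt1 a σ τ` with `σ`, `τ` of equal length lie in `ℤ + ℤ a`,
a discrete group when `a` is rational; hence every rational `a` in this range will do.
-/

section Words

variable (a : ℝ)

lemma S1_zero_apply (x : ℝ) : S1 a 0 x = x / 7 := rfl

lemma S1_one_apply (x : ℝ) : S1 a 1 x = x / 7 + a := rfl

lemma S1_two_apply (x : ℝ) : S1 a 2 x = x / 7 + 6 / 7 := rfl

lemma S1_eq_div_add (i : Fin 3) : S1 a i = fun x => x / 7 + S1 a i 0 := by
  funext x
  fin_cases i <;> simp [S1]

lemma isOpenMap_S1 (i : Fin 3) : IsOpenMap (S1 a i) := by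
  rw [S1_eq_div_add]
  simp only [div_eq_mul_inv]
  exact (isOpenMap_add_right (S1 a i 0)).comp
    (Homeomorph.mulRight₀ (7⁻¹ : ℝ) (by norm_num)).isOpenMap

lemma isOpenMap_Sw1 (σ : List (Fin 3)) : IsOpenMap (Sw1 a σ) := by
  induction σ with
  | nil => exact IsOpenMap.id
  | cons i σ ih => exact (isOpenMap_S1 a i).comp ih

lemma exists_seven_mul_S1_apply_zero_eq (i : Fin 3) : ∃ m n : ℤ, 7 * S1 a i 0 = m + n * a := by
  fin_cases i
  · exact ⟨0, 0, by simp [S1]⟩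
  · exact ⟨0, 7, by simp [S1]⟩
  · exact ⟨6, 0, by norm_num [S1]⟩

lemma exists_pow_mul_Sw1_apply_zero_eq (σ : List (Fin 3)) :
    ∃ m n : ℤ, 7 ^ σ.length * Sw1 a σ 0 = m + n * a := by
  induction σ with
  | nil => exact ⟨0, 0, by simp [Sw1]⟩
  | cons i σ ih =>
    obtain ⟨m, n, hσ⟩ := ih
    obtain ⟨m', n', hi⟩ := exists_seven_mul_S1_apply_zero_eq a i
    refine ⟨m + 7 ^ σ.length * m', n + 7 ^ σ.length * n', ?_⟩
    calc 7 ^ (σ.length + 1) * S1 a i (Sw1 a σ 0)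
        = 7 ^ σ.length * Sw1 a σ 0 + 7 ^ σ.length * (7 * S1 a i 0) := by
          rw [S1_eq_div_add]
          ring
      _ = ↑(m + 7 ^ σ.length * m') + ↑(n + 7 ^ σ.length * n') * a := by
          rw [hσ, hi]
          push_cast
          ring

lemma exists_amt1_eq {σ τ : List (Fin 3)} (hlen : σ.length = τ.length) :
    ∃ m n : ℤ, amt1 a σ τ = m + n * a := by
  obtain ⟨m, n, hσ⟩ := exists_pow_mul_Sw1_apply_zero_eq a σ
  obtain ⟨m', n', hτ⟩ := exists_pow_mul_Sw1_apply_zero_eq a τ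
  refine ⟨m' - m, n' - n, ?_⟩
  rw [amt1, mul_sub, hσ, hlen, hτ]
  push_cast
  ring

end Words

lemma wsp1_ratCast (q : ℚ) : WSP1 q := by
  have hden : (0 : ℝ) < q.den := mod_cast q.den_pos
  refine ⟨1 / q.den, by positivity, fun σ τ hlen hne => ?_⟩
  obtain ⟨m, n, hmn⟩ := exists_amt1_eq (q : ℝ) hlen
  have hfrac : amt1 q σ τ = ((m * q.den + n * q.num : ℤ) : ℝ) / q.den := by
    rw [hmn, Rat.cast_def]
    push_cast
    field_simp
  have hnum : m * q.den + n * q.num ≠ 0 := by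
    intro h
    simp [hfrac, h] at hne
  rw [hfrac, abs_div, abs_of_pos hden]
  gcongr
  exact mod_cast Int.one_le_abs hnum

section OpenSet

variable (a : ℝ)

lemma Vosc_eq_union : Vosc a = Ioo (3 / 7) (4 / 7) ∪ ⋃ i, S1 a i '' Vosc a := by
  ext y
  simp only [Vosc, image_iUnion, mem_union, mem_iUnion, ← image_comp]
  constructor
  · rintro ⟨_ | ⟨i, σ⟩, hy⟩
    · exact .inl (by simpa [Sw1] using hy)
    · exact .inr ⟨i, σ, hy⟩
  · rintro (hy | ⟨i, σ, hy⟩)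
    · exact ⟨[], by simpa [Sw1] using hy⟩
    · exact ⟨i :: σ, hy⟩

lemma Ioo_subset_Vosc : Ioo (3 / 7) (4 / 7) ⊆ Vosc a :=
  (Vosc_eq_union a).symm ▸ subset_union_left

lemma Vosc_nonempty : (Vosc a).Nonempty :=
  (nonempty_Ioo.2 (by norm_num)).mono (Ioo_subset_Vosc a)

lemma isOpen_Vosc : IsOpen (Vosc a) :=
  isOpen_iUnion fun σ => isOpenMap_Sw1 a σ _ isOpen_Ioo

lemma image_S1_Vosc_subset (i : Fin 3) : S1 a i '' Vosc a ⊆ Vosc a := by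
  conv_rhs => rw [Vosc_eq_union]
  exact (subset_iUnion (fun j => S1 a j '' Vosc a) i).trans subset_union_right

end OpenSet

section Location

variable {a : ℝ}

lemma S1_mapsTo_Ioo (ha : a ∈ Icc (0 : ℝ) (6 / 7)) (i : Fin 3) :
    MapsTo (S1 a i) (Ioo 0 1) (Ioo 0 1) := by
  rintro x ⟨hx₀, hx₁⟩
  obtain ⟨ha₀, ha₁⟩ := ha
  match i with
  | 0 => rw [S1_zero_apply]; constructor <;> linarith
  | 1 => rw [S1_one_apply]; constructor <;> linarith
  | 2 => rw [S1_two_apply]; constructor <;> linarith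

lemma Sw1_mapsTo_Ioo (ha : a ∈ Icc (0 : ℝ) (6 / 7)) (σ : List (Fin 3)) :
    MapsTo (Sw1 a σ) (Ioo 0 1) (Ioo 0 1) := by
  induction σ with
  | nil => exact mapsTo_id _
  | cons i σ ih => exact (S1_mapsTo_Ioo ha i).comp ih

lemma Vosc_subset_Ioo (ha : a ∈ Icc (0 : ℝ) (6 / 7)) : Vosc a ⊆ Ioo 0 1 :=
  iUnion_subset fun σ => ((Sw1_mapsTo_Ioo ha σ).mono_left
    (Ioo_subset_Ioo (by norm_num) (by norm_num))).image_subset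

lemma Vosc_subset_union_Ioo (ha : a ∈ Icc (0 : ℝ) (6 / 7)) :
    Vosc a ⊆ Ioo 0 (a + 1 / 7) ∪ Ioo (3 / 7) (4 / 7) ∪ Ioo (6 / 7) 1 := by
  intro y hy
  rw [Vosc_eq_union, mem_union, mem_iUnion] at hy
  obtain hy | ⟨i, x, hx, rfl⟩ := hy
  · exact .inl (.inr hy)
  · obtain ⟨hx₀, hx₁⟩ := Vosc_subset_Ioo ha hx
    obtain ⟨ha₀, -⟩ := ha
    match i with
    | 0 => exact .inl (.inl (by rw [S1_zero_apply]; constructor <;> linarith))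
    | 1 => exact .inl (.inl (by rw [S1_one_apply]; constructor <;> linarith))
    | 2 => exact .inr (by rw [S1_two_apply]; constructor <;> linarith)

lemma add_seven_mul_notMem_Vosc (ha : a ∈ Icc (1 / 42 : ℝ) (1 / 28)) {x : ℝ} (hx : x ∈ Vosc a) :
    x + 7 * a ∉ Vosc a := by
  intro hy
  obtain ⟨ha₀, ha₁⟩ := ha
  have hsub := Vosc_subset_union_Ioo (a := a) ⟨by linarith, by linarith⟩
  rcases hsub hx with (⟨hx₀, hx₁⟩ | ⟨hx₀, hx₁⟩) | ⟨hx₀, hx₁⟩ <;>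
    rcases hsub hy with (⟨-, hy₁⟩ | ⟨hy₀, hy₁⟩) | ⟨hy₀, hy₁⟩ <;>
    linarith

lemma disjoint_image_S1_zero_one (ha : a ∈ Icc (1 / 42 : ℝ) (1 / 28)) :
    Disjoint (S1 a 0 '' Vosc a) (S1 a 1 '' Vosc a) := by
  rw [disjoint_left]
  rintro _ ⟨x, hx, rfl⟩ ⟨y, hy, hyx⟩
  have hxy : x = y + 7 * a := by
    rw [S1_zero_apply, S1_one_apply] at hyx
    linarith
  exact add_seven_mul_notMem_Vosc ha hy (hxy ▸ hx)

lemma disjoint_image_S1_two (ha : a ∈ Icc (0 : ℝ) (5 / 7)) {i : Fin 3} (hi : i ≠ 2) :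
    Disjoint (S1 a i '' Vosc a) (S1 a 2 '' Vosc a) := by
  rw [disjoint_left]
  rintro _ ⟨x, hx, rfl⟩ ⟨y, hy, hyx⟩
  obtain ⟨ha₀, ha₁⟩ := ha
  have hsub := Vosc_subset_Ioo (a := a) ⟨ha₀, by linarith⟩
  have hx₁ := (hsub hx).2
  have hy₀ := (hsub hy).1
  match i with
  | 0 => rw [S1_zero_apply, S1_two_apply] at hyx; linarith
  | 1 => rw [S1_one_apply, S1_two_apply] at hyx; linarith
  | 2 => exact hi rfl

lemma pairwise_disjoint_image_S1 (ha : a ∈ Icc (1 / 42 : ℝ) (1 / 28)) :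
    Pairwise (Function.onFun Disjoint fun i => S1 a i '' Vosc a) := by
  have ha' : a ∈ Icc (0 : ℝ) (5 / 7) := Icc_subset_Icc (by norm_num) (by norm_num) ha
  rw [pairwise_disjoint_on]
  intro i j hij
  obtain rfl | ⟨rfl, rfl⟩ : j = 2 ∨ i = 0 ∧ j = 1 := by omega
  · exact disjoint_image_S1_two ha' hij.ne
  · exact disjoint_image_S1_zero_one ha

end Location

theorem stmt6_general (q : ℚ) (hq : (q : ℝ) ∈ Icc (1 / 42 : ℝ) (1 / 28)) :
    WSP1 q ∧
    (Vosc q).Nonempty ∧ IsOpen (Vosc q) ∧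
    (∀ i, S1 q i '' Vosc q ⊆ Vosc q) ∧
    (∀ i j, i ≠ j → S1 q i '' Vosc q ∩ S1 q j '' Vosc q = ∅) :=
  ⟨wsp1_ratCast q, Vosc_nonempty q, isOpen_Vosc q, image_S1_Vosc_subset q,
    fun _ _ hij => (pairwise_disjoint_image_S1 hq hij).inter_eq⟩

theorem stmt6 : ∃ a ∈ Ioo (0 : ℝ) (1 / 7),
    WSP1 a ∧
    (Vosc a).Nonempty ∧ IsOpen (Vosc a) ∧
    (∀ i, S1 a i '' Vosc a ⊆ Vosc a) ∧
    (∀ i j, i ≠ j → S1 a i '' Vosc a ∩ S1 a j '' Vosc a = ∅) :=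
  ⟨(1 / 35 : ℚ), by norm_num, stmt6_general (1 / 35) (by norm_num)⟩
end

section
/- Let 0 < r < 1 and let S_i(x) = r x + d_i, i = 1, …, n, be an equicontractive iterated function system on ℝ whose attractor K satisfies {0,1} ⊆ K ⊆ [0,1]. If the IFS satisfies the open set condition with the open set V = (0,1) (the convex open set condition), then for every k ≥ 0 and all distinct words σ, τ of length k over {1,…,n}, the translation amount a_{σ,τ} = r^{-k}(S_τ(0) − S_σ(0)) satisfies |a_{σ,τ}| ≥ 1; in particular the IFS satisfies the weak separation property. -/
/-!
Images of `V` under distinct words of equal length `k` are disjoint: on the first letter where the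
words differ the open set condition applies, and a common prefix is harmless because the maps are
injective. Since `S_τ = S_σ ∘ (· + a)` with `a = a_{σ,τ}`, cancelling `S_σ` turns this into
`V ∩ (V + a) = ∅`, and an interval contained in `V` forces `|a|` to be at least its length.
-/

open Set

/-- For a word σ = (s₁,…,s_k), the composition S_σ = S_{s₁} ∘ ⋯ ∘ S_{s_k}. -/
def compW {n : ℕ} (S : Fin n → ℝ → ℝ) : List (Fin n) → ℝ → ℝ
  | [] => id
  | i :: σ => S i ∘ compW S σ

open scoped Function

theorem sub_le_abs_of_disjoint_image_add_Ioo {α : Type*} [AddCommGroup α] [LinearOrder α]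
    [IsOrderedAddMonoid α] [DenselyOrdered α] {u v a : α}
    (h : Disjoint (Ioo u v) ((· + a) '' Ioo u v)) : v - u ≤ |a| := by
  have hends : v + min 0 a ≤ u + max 0 a := by
    simpa only [image_add_const_Ioo, Ioo_disjoint_Ioo, ← min_add_add_left, ← max_add_add_left,
      add_zero] using h
  calc
    v - u ≤ max 0 a - min 0 a := sub_le_sub_iff.2 (hends.trans_eq (add_comm _ _))
    _ = |a| := by rw [max_sub_min_eq_abs, sub_zero]

section Words

variable {n : ℕ} {S : Fin n → ℝ → ℝ} {V : Set ℝ}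

theorem mapsTo_compW (hV : ∀ i, MapsTo (S i) V V) : ∀ σ, MapsTo (compW S σ) V V
  | [] => mapsTo_id V
  | i :: σ => (hV i).comp (mapsTo_compW hV σ)

theorem disjoint_image_compW (hinj : ∀ i, (S i).Injective) (hV : ∀ i, MapsTo (S i) V V)
    (hdisj : Pairwise (Disjoint on fun i ↦ S i '' V)) :
    ∀ {σ τ : List (Fin n)}, σ.length = τ.length → σ ≠ τ →
      Disjoint (compW S σ '' V) (compW S τ '' V)
  | [], [], _, hne => absurd rfl hne
  | i :: σ, j :: τ, hlen, hne => by
    simp only [compW, image_comp]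
    obtain rfl | hij := eq_or_ne i j
    · have htail : Disjoint (compW S σ '' V) (compW S τ '' V) :=
        disjoint_image_compW hinj hV hdisj (Nat.succ_injective hlen) (ne_of_apply_ne _ hne)
      exact (disjoint_image_iff (hinj i)).2 htail
    · exact (hdisj hij).mono (image_mono (mapsTo_compW hV σ).image_subset)
        (image_mono (mapsTo_compW hV τ).image_subset)

end Words

section Equicontractive

variable {n : ℕ} {r : ℝ} {d : Fin n → ℝ} {S : Fin n → ℝ → ℝ} {σ τ : List (Fin n)}

/-- The amount `a_{σ,τ}` of the translation `S_σ⁻¹ ∘ S_τ`, for words `σ`, `τ` of equal length over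
maps of common ratio `r`. -/
noncomputable def translationAmount (r : ℝ) (S : Fin n → ℝ → ℝ) (σ τ : List (Fin n)) : ℝ :=
  (r ^ σ.length)⁻¹ * (compW S τ 0 - compW S σ 0)

/-- The weak separation property of maps with common ratio `r`: the nonzero translation amounts
between words of equal length are bounded away from `0`. -/
def WeakSeparation (r : ℝ) (S : Fin n → ℝ → ℝ) : Prop :=
  ∃ ε > 0, ∀ σ τ : List (Fin n), σ.length = τ.length →
    translationAmount r S σ τ ≠ 0 → ε ≤ |translationAmount r S σ τ|

theorem translationAmount_self (r : ℝ) (S : Fin n → ℝ → ℝ) (σ : List (Fin n)) :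
    translationAmount r S σ σ = 0 := by
  simp [translationAmount]

theorem compW_apply_eq_pow_mul_add (hS : ∀ i x, S i x = r * x + d i) (σ : List (Fin n)) (x : ℝ) :
    compW S σ x = r ^ σ.length * x + compW S σ 0 := by
  induction σ with
  | nil => simp [compW]
  | cons i σ ih =>
    simp only [compW, Function.comp_apply, hS, List.length_cons, ih, pow_succ]
    ring

theorem compW_add_translationAmount (hr : r ≠ 0) (hS : ∀ i x, S i x = r * x + d i)
    (hlen : σ.length = τ.length) (x : ℝ) :
    compW S σ (x + translationAmount r S σ τ) = compW S τ x := by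
  rw [compW_apply_eq_pow_mul_add hS σ, compW_apply_eq_pow_mul_add hS τ, translationAmount, mul_add,
    mul_inv_cancel_left₀ (pow_ne_zero _ hr), hlen]
  ring

theorem disjoint_image_add_translationAmount (hr : r ≠ 0) (hS : ∀ i x, S i x = r * x + d i)
    {V : Set ℝ} (hV : ∀ i, MapsTo (S i) V V) (hdisj : Pairwise (Disjoint on fun i ↦ S i '' V))
    (hlen : σ.length = τ.length) (hne : σ ≠ τ) :
    Disjoint V ((· + translationAmount r S σ τ) '' V) := by
  have hinj (i : Fin n) : (S i).Injective := fun x y hxy ↦ by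
    simpa only [hS, add_left_inj, mul_right_inj' hr] using hxy
  have himage : compW S τ '' V = compW S σ '' ((· + translationAmount r S σ τ) '' V) := by
    simp only [image_image, compW_add_translationAmount hr hS hlen]
  have hwords := disjoint_image_compW hinj hV hdisj hlen hne
  rw [himage] at hwords
  exact hwords.of_image

theorem stmt8_general (hr : r ≠ 0) (hS : ∀ i x, S i x = r * x + d i) {V : Set ℝ} {u v : ℝ}
    (huv : u < v) (hsub : Ioo u v ⊆ V) (hV : ∀ i, MapsTo (S i) V V)
    (hdisj : Pairwise (Disjoint on fun i ↦ S i '' V)) :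
    (∀ σ τ : List (Fin n), σ.length = τ.length → σ ≠ τ → v - u ≤ |translationAmount r S σ τ|) ∧
      WeakSeparation r S := by
  have hbound (σ τ : List (Fin n)) (hlen : σ.length = τ.length) (hne : σ ≠ τ) :
      v - u ≤ |translationAmount r S σ τ| :=
    sub_le_abs_of_disjoint_image_add_Ioo <|
      (disjoint_image_add_translationAmount hr hS hV hdisj hlen hne).mono hsub (image_mono hsub)
  refine ⟨hbound, v - u, sub_pos.2 huv, fun σ τ hlen hnonzero ↦ hbound σ τ hlen ?_⟩
  rintro rfl
  exact hnonzero (translationAmount_self r S σ)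

end Equicontractive

theorem stmt8 {n : ℕ} (r : ℝ) (hr0 : 0 < r) (hr1 : r < 1)
    (d : Fin n → ℝ) (S : Fin n → ℝ → ℝ) (hS : ∀ i x, S i x = r * x + d i)
    (K : Set ℝ) (hKne : K.Nonempty) (hKcpt : IsCompact K)
    (hKinv : K = ⋃ i, S i '' K)
    (hK01 : ({0, 1} : Set ℝ) ⊆ K) (hKsub : K ⊆ Icc 0 1)
    (hOSCco : (∀ i, S i '' Ioo 0 1 ⊆ Ioo 0 1) ∧
      ∀ i j, i ≠ j → S i '' Ioo 0 1 ∩ S j '' Ioo 0 1 = ∅) :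
    (∀ σ τ : List (Fin n), σ.length = τ.length → σ ≠ τ →
      1 ≤ |(r ^ σ.length)⁻¹ * (compW S τ 0 - compW S σ 0)|) ∧
    (∃ ε > 0, ∀ σ τ : List (Fin n), σ.length = τ.length →
      (r ^ σ.length)⁻¹ * (compW S τ 0 - compW S σ 0) ≠ 0 →
      ε ≤ |(r ^ σ.length)⁻¹ * (compW S τ 0 - compW S σ 0)|) := by
  simpa only [WeakSeparation, translationAmount, sub_zero] using
    stmt8_general hr0.ne' hS zero_lt_one Subset.rfl (fun i ↦ mapsTo_iff_image_subset.2 (hOSCco.1 i))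
      fun i j hij ↦ disjoint_iff_inter_eq_empty.2 (hOSCco.2 i j hij)
end

section
/- For every real number a ∈ ℝ, the iterated function system 𝒮₂(a) = {x/16, x/16 + a, x/16 + 15/16 − 16a, x/16 + 11/16, x/16 + 15/16} does not satisfy the open set condition: for every nonempty open set V ⊆ ℝ with S_i(V) ⊆ V for all i, one has S₁(V) ∩ S₂(V) ≠ ∅, since S₁ ∘ S₅ = S₂ ∘ S₃. -/
open Set

/-- The IFS 𝒮₂(a) = {x/16, x/16 + a, x/16 + 15/16 − 16a, x/16 + 11/16, x/16 + 15/16}. -/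
noncomputable def S2 (a : ℝ) : Fin 5 → ℝ → ℝ :=
  ![fun x => x / 16, fun x => x / 16 + a, fun x => x / 16 + 15 / 16 - 16 * a,
    fun x => x / 16 + 11 / 16, fun x => x / 16 + 15 / 16]

/-- For a word σ = (s₁,…,s_k), the composition S_σ = S_{s₁} ∘ ⋯ ∘ S_{s_k}. -/
noncomputable def Sw2 (a : ℝ) : List (Fin 5) → ℝ → ℝ
  | [] => id
  | i :: σ => S2 a i ∘ Sw2 a σ

/-- For words σ, τ of the same length k, S_σ⁻¹ ∘ S_τ is the translation by
`amt2 a σ τ = 16 ^ k * (S_τ(0) − S_σ(0))`. -/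
noncomputable def amt2 (a : ℝ) (σ τ : List (Fin 5)) : ℝ :=
  16 ^ σ.length * (Sw2 a τ 0 - Sw2 a σ 0)

/-- The weak separation property for 𝒮₂(a). -/
def WSP2 (a : ℝ) : Prop :=
  ∃ ε > 0, ∀ σ τ : List (Fin 5), σ.length = τ.length →
    amt2 a σ τ ≠ 0 → ε ≤ |amt2 a σ τ|

/-- The neighbourhood type of a word σ relative to an open set V. -/
noncomputable def Ntype2 (a : ℝ) (V : Set ℝ) (σ : List (Fin 5)) : Set ℝ :=
  { t | ∃ τ : List (Fin 5), τ.length = σ.length ∧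
      (Sw2 a σ '' V ∩ Sw2 a τ '' V).Nonempty ∧ t = amt2 a σ τ }

/-- The open set condition for 𝒮₂(a). -/
def OSC2 (a : ℝ) : Prop :=
  ∃ V : Set ℝ, V.Nonempty ∧ IsOpen V ∧ (∀ i, S2 a i '' V ⊆ V) ∧
    ∀ i j, i ≠ j → S2 a i '' V ∩ S2 a j '' V = ∅

/-- The convex open set condition for 𝒮₂(a): OSC with V = (0,1). -/
def OSCco2 (a : ℝ) : Prop :=
  (∀ i, S2 a i '' Ioo 0 1 ⊆ Ioo 0 1) ∧
    ∀ i j, i ≠ j → S2 a i '' Ioo 0 1 ∩ S2 a j '' Ioo 0 1 = ∅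

/-- The finite type condition for 𝒮₂(a): some nonempty open invariant V admits only
finitely many neighbourhood types. -/
def FTC2 (a : ℝ) : Prop :=
  ∃ V : Set ℝ, V.Nonempty ∧ IsOpen V ∧ (∀ i, S2 a i '' V ⊆ V) ∧
    (Set.range (Ntype2 a V)).Finite

/-- The convex finite type condition for 𝒮₂(a): finitely many neighbourhood types
relative to (0,1). -/
def FTCco2 (a : ℝ) : Prop := (Set.range (Ntype2 a (Ioo 0 1))).Finite

theorem image_inter_image_nonempty_of_comp_eq {α β γ δ : Type*} {f : β → δ} {g : γ → δ}
    {p : α → β} {q : α → γ} {s : Set α} {t : Set β} {u : Set γ} (hs : s.Nonempty)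
    (hp : MapsTo p s t) (hq : MapsTo q s u) (hcomp : f ∘ p = g ∘ q) :
    (f '' t ∩ g '' u).Nonempty := by
  obtain ⟨x, hx⟩ := hs
  have hg : g (q x) = f (p x) := (congrFun hcomp x).symm
  exact ⟨f (p x), mem_image_of_mem f (hp hx), q x, hq hx, hg⟩

theorem S2_zero_comp_S2_four (a : ℝ) : S2 a 0 ∘ S2 a 4 = S2 a 1 ∘ S2 a 2 := by
  funext x
  change (x / 16 + 15 / 16) / 16 = (x / 16 + 15 / 16 - 16 * a) / 16 + a
  ring

theorem stmt10_general (a : ℝ) :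
    S2 a 0 ∘ S2 a 4 = S2 a 1 ∘ S2 a 2 ∧
    ∀ V : Set ℝ, V.Nonempty → (∀ i, S2 a i '' V ⊆ V) →
      (S2 a 0 '' V ∩ S2 a 1 '' V).Nonempty :=
  ⟨S2_zero_comp_S2_four a, fun _ hne hV =>
    image_inter_image_nonempty_of_comp_eq hne (mapsTo_iff_image_subset.2 (hV 4))
      (mapsTo_iff_image_subset.2 (hV 2)) (S2_zero_comp_S2_four a)⟩

theorem stmt10 : ∀ a : ℝ,
    S2 a 0 ∘ S2 a 4 = S2 a 1 ∘ S2 a 2 ∧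
    (∀ V : Set ℝ, V.Nonempty → IsOpen V → (∀ i, S2 a i '' V ⊆ V) →
      (S2 a 0 '' V ∩ S2 a 1 '' V).Nonempty) ∧
    ¬ OSC2 a := by
  intro a
  obtain ⟨hcomp, hinter⟩ := stmt10_general a
  exact ⟨hcomp, fun V hne _ hV => hinter V hne hV,
    fun ⟨V, hne, _, hV, hdisj⟩ => (hinter V hne hV).ne_empty (hdisj 0 1 zero_ne_one)⟩
end

section
/- There exists a real number a ∈ (0, 1/16) such that the iterated function system 𝒮₂(a) = {x/16, x/16 + a, x/16 + 15/16 − 16a, x/16 + 11/16, x/16 + 15/16} satisfies the weak separation property, and there exists a nonempty open set V ⊆ ℝ with S_i(V) ⊆ V for all i such that the collection of neighbourhood types relative to V is exactly the three sets {0}, {0, 16a}, and {0, −16a}. -/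
open Set

/-!
The coincidence `S₁ ∘ S₅ = S₂ ∘ S₃` holds for every `a`. When `1 / 240 ≤ a ≤ 3 / 512` and
`V = (0, 1)`, it and the overlap of `S₁(V)` with `S₂(V)` account for all neighbours: cylinders with
displacement `0` have overlapping children only for equal letters, or for the letters `1` and `2`,
where the displacement becomes `±16a`; cylinders with displacement `16a` have overlapping children
only for the letters `5` and `3`, and these children coincide. So every displacement smaller than
`1` is `0` or `±16a`, which is the weak separation property, and the neighbourhood type of a word
depends only on whether its last letter is `1`, `2` or another one.

In the code the letters `1, …, 5` are `0, …, 4`.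
-/

section Displacement

variable {a : ℝ} {σ τ : List (Fin 5)}

lemma S2_apply (a : ℝ) (i : Fin 5) (x : ℝ) : S2 a i x = x / 16 + S2 a i 0 := by
  fin_cases i <;>
    simp only [S2, Fin.zero_eta, Fin.mk_one, Fin.reduceFinMk, Matrix.cons_val] <;>
    ring

lemma Sw2_append (a : ℝ) (σ τ : List (Fin 5)) : Sw2 a (σ ++ τ) = Sw2 a σ ∘ Sw2 a τ := by
  induction σ with
  | nil => rfl
  | cons i σ ih => rw [List.cons_append, Sw2, Sw2, ih, Function.comp_assoc]

lemma Sw2_apply (a : ℝ) (σ : List (Fin 5)) (x : ℝ) :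
    Sw2 a σ x = x / 16 ^ σ.length + Sw2 a σ 0 := by
  induction σ with
  | nil => simp [Sw2]
  | cons i σ ih =>
    simp only [Sw2, Function.comp_apply, List.length_cons]
    rw [S2_apply, ih, S2_apply a i (Sw2 a σ 0), pow_succ]
    field_simp
    ring

lemma Sw2_injective (a : ℝ) (σ : List (Fin 5)) : Function.Injective (Sw2 a σ) := fun x y h => by
  rw [Sw2_apply a σ x, Sw2_apply a σ y] at h
  exact (div_left_inj' (by positivity)).1 (add_right_cancel h)

lemma amt2_self (a : ℝ) (σ : List (Fin 5)) : amt2 a σ σ = 0 := by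
  rw [amt2, sub_self, mul_zero]

lemma Sw2_eq_Sw2_add_amt2 (hl : σ.length = τ.length) (x : ℝ) :
    Sw2 a τ x = Sw2 a σ (x + amt2 a σ τ) := by
  rw [Sw2_apply, Sw2_apply a σ, amt2, hl]
  field_simp
  ring

lemma amt2_append_singleton (hl : σ.length = τ.length) (i j : Fin 5) :
    amt2 a (σ ++ [i]) (τ ++ [j]) = 16 * (amt2 a σ τ + S2 a j 0 - S2 a i 0) := by
  have hSw (ρ : List (Fin 5)) (k : Fin 5) : Sw2 a (ρ ++ [k]) 0 = Sw2 a ρ (S2 a k 0) := by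
    rw [Sw2_append]
    rfl
  rw [amt2, hSw, hSw, Sw2_apply a τ, Sw2_apply a σ, ← hl, List.length_append,
    List.length_singleton, pow_succ, amt2]
  field_simp
  ring

lemma exists_mem_Ioo_add_mem_Ioo_iff (t : ℝ) :
    (∃ y ∈ Ioo (0 : ℝ) 1, y + t ∈ Ioo (0 : ℝ) 1) ↔ |t| < 1 := by
  rw [abs_lt]
  constructor
  · rintro ⟨y, ⟨hy0, hy1⟩, hyt0, hyt1⟩
    constructor <;> linarith
  · rintro ⟨ht0, ht1⟩
    refine ⟨(1 - t) / 2, ⟨?_, ?_⟩, ?_, ?_⟩ <;> linarith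

lemma image_Sw2_inter_nonempty_iff (hl : σ.length = τ.length) :
    (Sw2 a σ '' Ioo 0 1 ∩ Sw2 a τ '' Ioo 0 1).Nonempty ↔ |amt2 a σ τ| < 1 := by
  rw [← exists_mem_Ioo_add_mem_Ioo_iff]
  constructor
  · rintro ⟨_, ⟨x, hx, rfl⟩, y, hy, hxy⟩
    rw [Sw2_eq_Sw2_add_amt2 hl] at hxy
    exact ⟨y, hy, Sw2_injective a σ hxy ▸ hx⟩
  · rintro ⟨y, hy, hyt⟩
    exact ⟨Sw2 a τ y, ⟨_, hyt, (Sw2_eq_Sw2_add_amt2 hl y).symm⟩, y, hy, rfl⟩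

lemma mem_Ntype2_Ioo_iff {t : ℝ} :
    t ∈ Ntype2 a (Ioo 0 1) σ ↔ |t| < 1 ∧ ∃ τ, τ.length = σ.length ∧ amt2 a σ τ = t := by
  constructor
  · rintro ⟨τ, hl, hne, rfl⟩
    exact ⟨(image_Sw2_inter_nonempty_iff hl.symm).1 hne, τ, hl, rfl⟩
  · rintro ⟨ht, τ, hl, rfl⟩
    exact ⟨τ, hl, (image_Sw2_inter_nonempty_iff hl.symm).2 ht, rfl⟩

end Displacement

section Overlap

variable {a : ℝ}

lemma S2_zero_mem_Icc (ha : a ∈ Icc 0 (15 / 256)) (i : Fin 5) : S2 a i 0 ∈ Icc 0 (15 / 16) := by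
  obtain ⟨ha0, ha1⟩ := ha
  fin_cases i <;>
    simp only [S2, Fin.zero_eta, Fin.mk_one, Fin.reduceFinMk, Matrix.cons_val] <;>
    constructor <;> linarith

lemma image_S2_Ioo_subset (ha : a ∈ Icc 0 (15 / 256)) (i : Fin 5) :
    S2 a i '' Ioo 0 1 ⊆ Ioo 0 1 := by
  rintro _ ⟨x, ⟨hx0, hx1⟩, rfl⟩
  obtain ⟨hi0, hi1⟩ := S2_zero_mem_Icc ha i
  rw [S2_apply]
  constructor <;> linarith

lemma abs_lt_one_of_abs_child_lt_one (ha : a ∈ Icc 0 (15 / 256)) {t : ℝ} {i j : Fin 5}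
    (h : |16 * (t + S2 a j 0 - S2 a i 0)| < 1) : |t| < 1 := by
  obtain ⟨hi0, hi1⟩ := S2_zero_mem_Icc ha i
  obtain ⟨hj0, hj1⟩ := S2_zero_mem_Icc ha j
  rw [abs_lt] at h ⊢
  constructor <;> linarith

lemma S2_two_add_eq_S2_four (a : ℝ) : S2 a 2 0 + 16 * a = S2 a 4 0 := by
  simp [S2]

-- The bound `1 / 256` keeps the pair `(i, j) = (2, 4)` apart, and `3 / 256` the pair `(2, 3)`.
lemma overlap_of_displacement_zero (ha : a ∈ Icc (1 / 256) (3 / 256)) {i j : Fin 5}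
    (h : |16 * (S2 a j 0 - S2 a i 0)| < 1) : j = i ∨ i = 0 ∧ j = 1 ∨ i = 1 ∧ j = 0 := by
  obtain ⟨ha0, ha1⟩ := ha
  obtain ⟨h0, h1⟩ := abs_lt.1 h
  fin_cases i <;> fin_cases j <;>
    first
    | decide
    | simp only [S2, Fin.zero_eta, Fin.mk_one, Fin.reduceFinMk, Matrix.cons_val, zero_div] at h0 h1
      linarith

-- The bound `1 / 240` keeps the pair `(i, j) = (1, 0)` apart, and `3 / 512` the pair `(2, 3)`.
lemma overlap_of_displacement_pos (ha : a ∈ Icc (1 / 240) (3 / 512)) {i j : Fin 5}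
    (h : |16 * (16 * a + S2 a j 0 - S2 a i 0)| < 1) : i = 4 ∧ j = 2 := by
  obtain ⟨ha0, ha1⟩ := ha
  obtain ⟨h0, h1⟩ := abs_lt.1 h
  fin_cases i <;> fin_cases j <;>
    first
    | decide
    | simp only [S2, Fin.zero_eta, Fin.mk_one, Fin.reduceFinMk, Matrix.cons_val, zero_div] at h0 h1
      linarith

end Overlap

section NeighbourhoodTypes

variable {a : ℝ} {σ τ : List (Fin 5)}

lemma child_displacement_cases (ha : a ∈ Icc (1 / 240) (3 / 512)) {t : ℝ}
    (ht : t = 0 ∨ t = 16 * a ∨ t = -(16 * a)) {i j : Fin 5}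
    (h : |16 * (t + S2 a j 0 - S2 a i 0)| < 1) :
    16 * (t + S2 a j 0 - S2 a i 0) = 0 ∨
      16 * (t + S2 a j 0 - S2 a i 0) = 16 * a ∧ i = 0 ∨
      16 * (t + S2 a j 0 - S2 a i 0) = -(16 * a) ∧ i = 1 := by
  rcases ht with rfl | rfl | rfl
  · rw [zero_add] at h
    have ha' : a ∈ Icc (1 / 256) (3 / 256) := Icc_subset_Icc (by norm_num) (by norm_num) ha
    rcases overlap_of_displacement_zero ha' h with rfl | ⟨rfl, rfl⟩ | ⟨rfl, rfl⟩ <;> simp [S2]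
  · obtain ⟨rfl, rfl⟩ := overlap_of_displacement_pos ha h
    left
    linarith [S2_two_add_eq_S2_four a]
  · have h' : |16 * (16 * a + S2 a i 0 - S2 a j 0)| < 1 := by
      rw [← abs_neg]
      convert h using 2
      ring
    obtain ⟨rfl, rfl⟩ := overlap_of_displacement_pos ha h'
    left
    linarith [S2_two_add_eq_S2_four a]

lemma amt2_cases_of_abs_lt_one (ha : a ∈ Icc (1 / 240) (3 / 512)) (hl : σ.length = τ.length)
    (h : |amt2 a σ τ| < 1) :
    amt2 a σ τ = 0 ∨ amt2 a σ τ = 16 * a ∧ σ.getLast? = some 0 ∨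
      amt2 a σ τ = -(16 * a) ∧ σ.getLast? = some 1 := by
  induction σ using List.reverseRecOn generalizing τ with
  | nil =>
    obtain rfl : τ = [] := List.length_eq_zero_iff.1 hl.symm
    exact Or.inl (amt2_self a [])
  | append_singleton σ i ih =>
    obtain rfl | ⟨τ, j, rfl⟩ := List.eq_nil_or_concat' τ
    · simp at hl
    · replace hl : σ.length = τ.length := by simpa using hl
      rw [amt2_append_singleton hl] at h ⊢
      have hparent : |amt2 a σ τ| < 1 :=
        abs_lt_one_of_abs_child_lt_one (Icc_subset_Icc (by norm_num) (by norm_num) ha) h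
      have hcases : amt2 a σ τ = 0 ∨ amt2 a σ τ = 16 * a ∨ amt2 a σ τ = -(16 * a) :=
        (ih hl hparent).imp_right (Or.imp And.left And.left)
      simpa using child_displacement_cases ha hcases h

lemma WSP2_of_mem_Icc (ha : a ∈ Icc (1 / 240) (3 / 512)) : WSP2 a := by
  have ha0 : 0 < 16 * a := by linarith [ha.1]
  refine ⟨16 * a, ha0, fun σ τ hl hne => ?_⟩
  by_cases h : |amt2 a σ τ| < 1
  · rcases amt2_cases_of_abs_lt_one ha hl h with h0 | ⟨hp, -⟩ | ⟨hn, -⟩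
    · exact absurd h0 hne
    · rw [hp, abs_of_pos ha0]
    · rw [hn, abs_neg, abs_of_pos ha0]
  · linarith [ha.2]

lemma exists_amt2_eq_of_getLast?_eq_zero (a : ℝ) (h : σ.getLast? = some 0) :
    ∃ τ, τ.length = σ.length ∧ amt2 a σ τ = 16 * a := by
  obtain ⟨ρ, rfl⟩ := List.getLast?_eq_some_iff.1 h
  refine ⟨ρ ++ [1], by simp, ?_⟩
  rw [amt2_append_singleton rfl, amt2_self]
  simp [S2]

lemma exists_amt2_eq_of_getLast?_eq_one (a : ℝ) (h : σ.getLast? = some 1) :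
    ∃ τ, τ.length = σ.length ∧ amt2 a σ τ = -(16 * a) := by
  obtain ⟨ρ, rfl⟩ := List.getLast?_eq_some_iff.1 h
  refine ⟨ρ ++ [0], by simp, ?_⟩
  rw [amt2_append_singleton rfl, amt2_self]
  simp [S2]

lemma mem_Ntype2_Ioo_iff_getLast? (ha : a ∈ Icc (1 / 240) (3 / 512)) {t : ℝ} :
    t ∈ Ntype2 a (Ioo 0 1) σ ↔
      t = 0 ∨ t = 16 * a ∧ σ.getLast? = some 0 ∨ t = -(16 * a) ∧ σ.getLast? = some 1 := by
  have habs : |16 * a| < 1 := abs_lt.2 ⟨by linarith [ha.1], by linarith [ha.2]⟩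
  rw [mem_Ntype2_Ioo_iff]
  constructor
  · rintro ⟨ht, τ, hl, rfl⟩
    exact amt2_cases_of_abs_lt_one ha hl.symm ht
  · rintro (rfl | ⟨rfl, h⟩ | ⟨rfl, h⟩)
    · exact ⟨by simp, σ, rfl, amt2_self a σ⟩
    · exact ⟨habs, exists_amt2_eq_of_getLast?_eq_zero a h⟩
    · exact ⟨by rwa [abs_neg], exists_amt2_eq_of_getLast?_eq_one a h⟩

lemma Ntype2_Ioo_eq_ite (ha : a ∈ Icc (1 / 240) (3 / 512)) (σ : List (Fin 5)) :
    Ntype2 a (Ioo 0 1) σ =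
      if σ.getLast? = some 0 then {0, 16 * a}
      else if σ.getLast? = some 1 then {0, -(16 * a)} else {0} := by
  ext t
  rw [mem_Ntype2_Ioo_iff_getLast? ha]
  split_ifs with h0 h1
  · simp [h0]
  · simp [h1]
  · simp [h0, h1]

lemma range_Ntype2_Ioo (ha : a ∈ Icc (1 / 240) (3 / 512)) :
    range (Ntype2 a (Ioo 0 1)) = {{0}, {0, 16 * a}, {0, -(16 * a)}} := by
  apply Subset.antisymm
  · rintro _ ⟨σ, rfl⟩
    rw [Ntype2_Ioo_eq_ite ha]
    split_ifs <;> simp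
  · rintro _ (rfl | rfl | rfl)
    · exact ⟨[], by simp [Ntype2_Ioo_eq_ite ha]⟩
    · exact ⟨[0], by simp [Ntype2_Ioo_eq_ite ha]⟩
    · exact ⟨[1], by simp [Ntype2_Ioo_eq_ite ha]⟩

end NeighbourhoodTypes

theorem stmt12_general {a : ℝ} (ha : a ∈ Icc (1 / 240) (3 / 512)) :
    WSP2 a ∧
    ∃ V : Set ℝ, V.Nonempty ∧ IsOpen V ∧ (∀ i, S2 a i '' V ⊆ V) ∧
      Set.range (Ntype2 a V) =
        {({0} : Set ℝ), {0, 16 * a}, {0, -(16 * a)}} :=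
  ⟨WSP2_of_mem_Icc ha, Ioo 0 1, nonempty_Ioo.2 one_pos, isOpen_Ioo,
    image_S2_Ioo_subset (Icc_subset_Icc (by norm_num) (by norm_num) ha), range_Ntype2_Ioo ha⟩

theorem stmt12 : ∃ a ∈ Ioo (0 : ℝ) (1 / 16),
    WSP2 a ∧
    ∃ V : Set ℝ, V.Nonempty ∧ IsOpen V ∧ (∀ i, S2 a i '' V ⊆ V) ∧
      Set.range (Ntype2 a V) =
        {({0} : Set ℝ), {0, 16 * a}, {0, -(16 * a)}} :=
  ⟨1 / 192, by constructor <;> norm_num, stmt12_general (by constructor <;> norm_num)⟩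
end
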